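/- arXiv:1012.1095 — 2 statements merged into one kernel-verified Lean document; each statement's English description precedes it below -/
import Mathlib

section
/- In the Boolean OR mixture model, fix a monitor index h, let J₀ = { j : g_{hj} = 0 }, let G′ be the submatrix of G with rows i ≠ h and columns j ∈ J₀, and let x′ = G′ ⊗ (y_j)_{j ∈ J₀}. Then for every v ∈ {0,1}^{m−1}, P( (x_i)_{i ≠ h} = v and x_h = 0 ) = ( ∏_{j : g_{hj} = 1} (1 − p_j) ) · P( x′ = v ). -/
/-- Boolean OR mixture: `x i = ⋁_j (g i j ∧ y j)`. -/
def orMix {ι κ : Type*} [Fintype κ] (G : ι → κ → Bool) (y : κ → Bool) (i : ι) : Bool :=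
  decide (∃ j, G i j = true ∧ y j = true)

/-- Weight of a configuration `y` under independent Bernoulli sources with
parameters `p`. -/
noncomputable def bweight {κ : Type*} [Fintype κ] (p : κ → ℝ) (y : κ → Bool) : ℝ :=
  ∏ j, if y j then p j else 1 - p j

open Classical in
/-- Probability of an event `E` under independent Bernoulli sources with
parameters `p`. -/
noncomputable def bprob {κ : Type*} [Fintype κ] [DecidableEq κ] (p : κ → ℝ)
    (E : (κ → Bool) → Prop) : ℝ :=
  ∑ y : κ → Bool, if E y then bweight p y else 0

/-! We have `x_h = 0` exactly when every source seen by `h` is off, and then no monitor receives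
anything from these sources. The joint event is therefore the intersection of an event about the
sources not seen by `h` with the event that all sources seen by `h` are off, and the two blocks of
sources are independent. -/

section Bernoulli

variable {κ : Type*} [Fintype κ] (p : κ → ℝ)

theorem bweight_subtype_mul_bweight_subtype_not (P : κ → Prop) [DecidablePred P] (y : κ → Bool) :
    bweight (fun j : {j // P j} => p j) (fun j => y j) *
        bweight (fun j : {j // ¬ P j} => p j) (fun j => y j) = bweight p y :=
  Fintype.prod_subtype_mul_prod_subtype P fun j => if y j then p j else 1 - p j

variable [DecidableEq κ]

theorem bprob_and_subtype_eq_mul (P : κ → Prop) [DecidablePred P]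
    (E : ({j // P j} → Bool) → Prop) (F : ({j // ¬ P j} → Bool) → Prop) :
    bprob p (fun y => E (fun j => y j) ∧ F (fun j => y j)) =
      bprob (fun j : {j // P j} => p j) E * bprob (fun j : {j // ¬ P j} => p j) F := by
  simp only [bprob]
  rw [Fintype.sum_mul_sum, ← Fintype.sum_prod_type']
  refine Fintype.sum_equiv (Equiv.piEquivPiSubtypeProd P fun _ => Bool) _ _ fun y => ?_
  simp only [Equiv.piEquivPiSubtypeProd_apply, ite_zero_mul_ite_zero,
    bweight_subtype_mul_bweight_subtype_not]
  congr

theorem bprob_forall_eq_false : bprob p (fun y => ∀ j, y j = false) = ∏ j, (1 - p j) := by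
  simp only [bprob, ← funext_iff (g := fun _ => false), Finset.sum_ite_eq', Finset.mem_univ,
    if_true, bweight, Bool.false_eq_true, if_false]

end Bernoulli

section OrMixture

variable {ι κ : Type*} [Fintype κ] (G : ι → κ → Bool)

theorem orMix_eq_false_iff (y : κ → Bool) (i : ι) :
    orMix G y i = false ↔ ∀ j, G i j = true → y j = false := by
  simp only [orMix, decide_eq_false_iff_not, not_exists, not_and, Bool.not_eq_true]

theorem orMix_subtype_of_eq_false (P : κ → Prop) [DecidablePred P] {y : κ → Bool}
    (hy : ∀ j, ¬ P j → y j = false) :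
    orMix (fun i (j : {j // P j}) => G i j) (fun j => y j) = orMix G y := by
  have pred_of_on {j : κ} (hj : y j = true) : P j := by
    by_contra hPj
    simp [hy j hPj] at hj
  funext i
  simp only [orMix, Subtype.exists, exists_prop, decide_eq_decide]
  exact exists_congr fun j => and_iff_right_of_imp fun hj => pred_of_on hj.2

theorem and_orMix_eq_false_iff (E : (ι → Bool) → Prop) (h : ι) (y : κ → Bool) :
    E (orMix G y) ∧ orMix G y h = false ↔
      E (orMix (fun i (j : {j // G h j = false}) => G i j) (fun j => y j)) ∧
        ∀ j : {j // ¬ G h j = false}, y j = false := by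
  have off_iff : orMix G y h = false ↔ ∀ j : {j // ¬ G h j = false}, y j = false := by
    simp only [orMix_eq_false_iff, Subtype.forall, Bool.not_eq_false]
  rw [off_iff]
  refine and_congr_left fun hoff => ?_
  rw [orMix_subtype_of_eq_false G (fun j => G h j = false) fun j hj => hoff ⟨j, hj⟩]

theorem or_mixture_restrict_zero_general [DecidableEq κ] (p : κ → ℝ) (h : ι)
    (E : (ι → Bool) → Prop) :
    bprob p (fun y => E (orMix G y) ∧ orMix G y h = false) =
      (∏ j ∈ Finset.univ.filter (fun j => G h j = true), (1 - p j)) *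
        bprob (fun j : {j // G h j = false} => p j)
          (fun y' => E (orMix (fun i (j : {j // G h j = false}) => G i j) y')) := by
  have prod_eq : ∏ j : {j // ¬ G h j = false}, (1 - p j) =
      ∏ j ∈ Finset.univ.filter (fun j => G h j = true), (1 - p j) :=
    (Finset.prod_subtype _ (fun j => by simp) fun j => 1 - p j).symm
  simp only [and_orMix_eq_false_iff G E h]
  rw [bprob_and_subtype_eq_mul p (fun j => G h j = false)
      (fun y' => E (orMix (fun i (j : {j // G h j = false}) => G i j) y'))
      (fun z => ∀ j, z j = false),
    bprob_forall_eq_false, prod_eq, mul_comm]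

end OrMixture

/-- Fix a monitor `h`.  The joint probability that all other monitors read `v`
while monitor `h` reads `0` factors as `(∏_{j : g_{hj}=1} (1 - p_j))` times the
probability that the OR mixture `x' = G' ⊗ (y_j)_{j ∈ J₀}` (rows `i ≠ h`,
columns the sources not observed by `h`) equals `v`. -/
theorem or_mixture_restrict_zero (m n : ℕ) (G : Fin m → Fin n → Bool)
    (p : Fin n → ℝ) (hp : ∀ j, p j ∈ Set.Icc (0 : ℝ) 1) (h : Fin m)
    (v : {i : Fin m // i ≠ h} → Bool) :
    bprob p (fun y =>
        (∀ i : {i : Fin m // i ≠ h}, orMix G y i.1 = v i) ∧ orMix G y h = false)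
      = (∏ j ∈ Finset.univ.filter (fun j => G h j = true), (1 - p j)) *
          bprob (fun j : {j : Fin n // G h j = false} => p j.1)
            (fun y' => ∀ i : {i : Fin m // i ≠ h},
              orMix (fun (i : {i : Fin m // i ≠ h}) (j : {j : Fin n // G h j = false})
                => G i.1 j.1) y' i = v i) :=
  -- Deleting row `h` of `G` only forgets the coordinate `h` of `orMix G y`, definitionally.
  or_mixture_restrict_zero_general G p h fun x => ∀ i : {i : Fin m // i ≠ h}, x i.1 = v i
end

section
/- In the Boolean OR mixture model, suppose two distinct columns a ≠ b of G are identical (g_{ia} = g_{ib} for all i). Let G″ be the m×(n−1) matrix obtained from G by deleting column b, and let y″ be independent Bernoulli sources with parameters p″_a = 1 − (1 − p_a)(1 − p_b) and p″_j = p_j for all j ∉ {a, b}. Then the observation vectors G ⊗ y and G″ ⊗ y″ have the same joint distribution on {0,1}^m. -/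
/-!
Since columns `a` and `b` agree, the observation depends on the sources `a` and `b` only through
`y a ∨ y b`. This disjunction is Bernoulli with parameter `1 - (1 - p a) * (1 - p b)` and
independent of the other sources, so the merged sources have the law required in the smaller
mixture.
-/

section Sources

variable {κ : Type*} [Fintype κ] [DecidableEq κ]

theorem bweight_funSplitAt_symm (p : κ → ℝ) (b : κ) (c : Bool) (y : {j // j ≠ b} → Bool) :
    bweight p ((Equiv.funSplitAt b Bool).symm (c, y))
      = (if c then p b else 1 - p b) * bweight (fun j : {j // j ≠ b} => p j) y := by
  unfold bweight
  rw [Fintype.prod_eq_mul_prod_subtype_ne _ b]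
  congr 1
  · simp
  · exact Fintype.prod_congr _ _ fun j => by simp [j.2]

theorem bprob_eq_add_funSplitAt_symm (p : κ → ℝ) (E : (κ → Bool) → Prop) (b : κ) :
    bprob p E
      = p b * bprob (fun j : {j // j ≠ b} => p j)
            (fun y => E ((Equiv.funSplitAt b Bool).symm (true, y)))
        + (1 - p b) * bprob (fun j : {j // j ≠ b} => p j)
            (fun y => E ((Equiv.funSplitAt b Bool).symm (false, y))) := by
  unfold bprob
  rw [← (Equiv.funSplitAt b Bool).symm.sum_comp, Fintype.sum_prod_type, Fintype.sum_bool,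
    Finset.mul_sum, Finset.mul_sum]
  simp only [bweight_funSplitAt_symm, mul_ite, mul_zero, if_true, Bool.false_eq_true, if_false]

end Sources

section Merge

variable {κ : Type*} [DecidableEq κ]

/-- The configuration obtained by deleting source `b` and replacing source `a` by the disjunction
of sources `a` and `b`. The sources are indexed by the subtype `{j // j ≠ b}`, so `a` itself
survives only if `a ≠ b`. -/
def mergeSources (a b : κ) (y : κ → Bool) (j : {j // j ≠ b}) : Bool :=
  if (j : κ) = a then y a || y b else y j

/-- The Bernoulli parameters of the sources merged by `mergeSources a b`: at `a`, the probability
that at least one of the independent sources `a` and `b` is active. -/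
def mergeParams (a b : κ) (p : κ → ℝ) (j : {j // j ≠ b}) : ℝ :=
  if (j : κ) = a then 1 - (1 - p a) * (1 - p b) else p j

theorem mergeSources_funSplitAt_symm {a b : κ} (hab : a ≠ b) (c d : Bool)
    (y : {j : {j // j ≠ b} // j ≠ ⟨a, hab⟩} → Bool) :
    mergeSources a b ((Equiv.funSplitAt b Bool).symm
        (c, (Equiv.funSplitAt ⟨a, hab⟩ Bool).symm (d, y)))
      = (Equiv.funSplitAt ⟨a, hab⟩ Bool).symm (d || c, y) := by
  ext ⟨j, hj⟩
  by_cases hja : j = a <;> simp [mergeSources, hab, hj, hja]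

theorem mergeParams_self {a b : κ} (hab : a ≠ b) (p : κ → ℝ) :
    mergeParams a b p ⟨a, hab⟩ = 1 - (1 - p a) * (1 - p b) :=
  if_pos rfl

theorem mergeParams_of_ne {a b : κ} (p : κ → ℝ) {j : {j // j ≠ b}} (hj : (j : κ) ≠ a) :
    mergeParams a b p j = p j :=
  if_neg hj

variable [Fintype κ]

theorem bprob_mergeSources {a b : κ} (hab : a ≠ b) (p : κ → ℝ)
    (E : ({j // j ≠ b} → Bool) → Prop) :
    bprob p (fun y => E (mergeSources a b y)) = bprob (mergeParams a b p) E := by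
  have params_off_a : (fun j : {j : {j // j ≠ b} // j ≠ ⟨a, hab⟩} => mergeParams a b p j)
      = fun j => p j.1.1 :=
    funext fun j => mergeParams_of_ne p fun hj => j.2 (Subtype.ext hj)
  rw [bprob_eq_add_funSplitAt_symm p _ b,
    bprob_eq_add_funSplitAt_symm (fun j : {j // j ≠ b} => p j) _ ⟨a, hab⟩,
    bprob_eq_add_funSplitAt_symm (fun j : {j // j ≠ b} => p j) _ ⟨a, hab⟩,
    bprob_eq_add_funSplitAt_symm (mergeParams a b p) _ ⟨a, hab⟩, params_off_a,
    mergeParams_self]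
  simp only [mergeSources_funSplitAt_symm, Bool.or_true, Bool.or_false]
  ring

theorem orMix_mergeSources {ι : Type*} {G : ι → κ → Bool} {a b : κ} (hab : a ≠ b)
    (hcols : ∀ i, G i a = G i b) (y : κ → Bool) :
    orMix (fun i (j : {j // j ≠ b}) => G i j) (mergeSources a b y) = orMix G y := by
  ext i
  refine decide_eq_decide.mpr ⟨?_, ?_⟩
  · rintro ⟨⟨j, hj⟩, hG, hy⟩
    by_cases hja : j = a
    · subst hja
      obtain hya | hyb : y j = true ∨ y b = true := by simpa [mergeSources] using hy
      · exact ⟨j, hG, hya⟩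
      · exact ⟨b, hcols i ▸ hG, hyb⟩
    · exact ⟨j, hG, by simpa [mergeSources, hja] using hy⟩
  · rintro ⟨j, hG, hy⟩
    by_cases hjb : j = b
    · subst hjb
      exact ⟨⟨a, hab⟩, (hcols i).trans hG, by simp [mergeSources, hy]⟩
    · refine ⟨⟨j, hjb⟩, hG, ?_⟩
      by_cases hja : j = a
      · subst hja
        simp [mergeSources, hy]
      · simpa [mergeSources, hja] using hy

theorem or_mixture_merge_duplicate_columns_general {ι : Type*} (G : ι → κ → Bool) (p : κ → ℝ)
    {a b : κ} (hab : a ≠ b) (hcols : ∀ i, G i a = G i b) (E : (ι → Bool) → Prop) :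
    bprob p (fun y => E (orMix G y))
      = bprob (mergeParams a b p)
          (fun y => E (orMix (fun i (j : {j // j ≠ b}) => G i j) y)) := by
  simp only [← bprob_mergeSources hab, orMix_mergeSources hab hcols]

end Merge

/-- If two distinct columns `a ≠ b` of `G` are identical, then deleting column
`b` and replacing `p_a` by `1 - (1-p_a)(1-p_b)` yields an OR mixture whose
observation vector has the same joint distribution on `{0,1}^m`. -/
theorem or_mixture_merge_duplicate_columns (m n : ℕ) (G : Fin m → Fin n → Bool)
    (p : Fin n → ℝ) (hp : ∀ j, p j ∈ Set.Icc (0 : ℝ) 1)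
    (a b : Fin n) (hab : a ≠ b) (hcols : ∀ i, G i a = G i b)
    (v : Fin m → Bool) :
    bprob p (fun y => ∀ i, orMix G y i = v i)
      = bprob
          (fun j : {j : Fin n // j ≠ b} =>
            if (j : Fin n) = a then 1 - (1 - p a) * (1 - p b) else p j.1)
          (fun y'' => ∀ i,
            orMix (fun (i : Fin m) (j : {j : Fin n // j ≠ b}) => G i j.1) y'' i = v i) :=
  or_mixture_merge_duplicate_columns_general G p hab hcols fun x => ∀ i, x i = v i
end
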